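/- Let A and B be separable C*-algebras, let M(B) denote the multiplier algebra of B (with B embedded in M(B) as an ideal), and let π = (π_t)_{t∈[1,∞)} : A → M(B) be an asymptotic homomorphism such that π_t(a) − π_1(a) ∈ B for all t ∈ [1,∞) and all a ∈ A. Let (u_t)_{t∈[1,∞)} be a continuous approximate unit for B such that lim_{t→∞} ‖u_t π_1(a) − π_1(a) u_t‖ = 0 for all a ∈ A. Then there exists an increasing continuous function r : [1,∞) → [1,∞) with r(t) ≥ t for all t ∈ [1,∞) such that lim_{t→∞} ‖f(u_{r(t)}) π_1(a) − f(u_{r(t)}) π_t(a)‖ = 0 for every a ∈ A and every continuous function f : [0,1] → ℝ with f(0) = f(1) = 0. -/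

import Mathlib

open Filter Set
open scoped MultiplierAlgebra

/-- An asymptotic homomorphism from `A` to `B`: a family `φ = (φ_t)_{t ∈ [1,∞)}` of maps
`A → B` such that `t ↦ φ_t(a)` is continuous on `[1,∞)` for every `a`, and which is
asymptotically star-preserving, linear and multiplicative as `t → ∞`. -/
def IsAsymptoticHom {A B : Type*} [NonUnitalNormedRing A] [StarRing A] [Module ℂ A]
    [NonUnitalNormedRing B] [StarRing B] [Module ℂ B] (φ : ℝ → A → B) : Prop :=
  (∀ a : A, ContinuousOn (fun t => φ t a) (Ici 1)) ∧
  (∀ a : A, Tendsto (fun t => ‖φ t (star a) - star (φ t a)‖) atTop (nhds 0)) ∧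
  (∀ (a b : A) (c : ℂ),
    Tendsto (fun t => ‖φ t (c • a + b) - c • φ t a - φ t b‖) atTop (nhds 0)) ∧
  (∀ a b : A, Tendsto (fun t => ‖φ t (a * b) - φ t a * φ t b‖) atTop (nhds 0))

section Aux

lemma aux_core {D : Type*} [CStarAlgebra D] (p q y : D) (δ : ℝ) (hδ : δ ≤ 1 / 8)
    (h1 : ‖q - star p‖ ≤ δ) (h2 : ‖y - star y‖ ≤ δ)
    (h3 : ‖q * p - (2 : ℂ) • y + y * y‖ ≤ δ) : ‖p‖ ≤ 2 := by
  let _ := CStarAlgebra.spectralOrder D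
  have _ := CStarAlgebra.spectralOrderedRing D
  set w := 1 - y with hw
  have hδ0 : 0 ≤ δ := (norm_nonneg _).trans h1
  have key : star p * p + star w * w
      = 1 + (q * p - (2 : ℂ) • y + y * y) - (q - star p) * p + (y - star y) * w := by
    rw [hw, star_sub, star_one, two_smul]; noncomm_ring
  have h1n : ‖(1 : D)‖ ≤ 1 := by
    rcases subsingleton_or_nontrivial D with h | h
    · rw [Subsingleton.elim (1 : D) 0, norm_zero]; exact zero_le_one
    · exact CStarRing.norm_one.le
  have hS : ‖star p * p + star w * w‖ ≤ 1 + δ + δ * ‖p‖ + δ * ‖w‖ := by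
    rw [key]
    refine (norm_add_le _ _).trans (add_le_add ((norm_sub_le _ _).trans (add_le_add
      ((norm_add_le _ _).trans (add_le_add h1n h3)) ?_)) ?_)
    · exact (norm_mul_le _ _).trans (by gcongr)
    · exact (norm_mul_le _ _).trans (by gcongr)
  have hp : ‖star p * p‖ ≤ ‖star p * p + star w * w‖ :=
    CStarAlgebra.norm_le_norm_of_nonneg_of_le (star_mul_self_nonneg p)
      (le_add_of_nonneg_right (star_mul_self_nonneg w))
  have hw' : ‖star w * w‖ ≤ ‖star p * p + star w * w‖ :=
    CStarAlgebra.norm_le_norm_of_nonneg_of_le (star_mul_self_nonneg w)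
      (le_add_of_nonneg_left (star_mul_self_nonneg p))
  rw [CStarRing.norm_star_mul_self] at hp hw'
  have hP := norm_nonneg p
  have hW := norm_nonneg w
  have h5 : δ * ‖p‖ ≤ 1 / 8 * ‖p‖ := by gcongr
  have h6 : δ * ‖w‖ ≤ 1 / 8 * ‖w‖ := by gcongr
  by_contra! hc
  rcases le_total ‖w‖ ‖p‖ with h | h <;> nlinarith

lemma aux_hom {A D : Type*} [NonUnitalCStarAlgebra A] [CStarAlgebra D] (φ : ℝ → A → D)
    (h : IsAsymptoticHom φ) :
    (∀ a b, Tendsto (fun t => φ t (a + b) - φ t a - φ t b) atTop (nhds 0)) ∧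
    (∀ (c : ℂ) a, Tendsto (fun t => φ t (c • a) - c • φ t a) atTop (nhds 0)) := by
  obtain ⟨-, -, h, -⟩ := h
  have h' := fun a b c => tendsto_zero_iff_norm_tendsto_zero.2 (h a b c)
  have h0 : Tendsto (fun t => φ t 0) atTop (nhds 0) := by
    simpa using (h' 0 0 1).neg
  refine ⟨fun a b => by simpa using h' a b 1, fun c a => ?_⟩
  simpa using (h' a 0 c).add h0

lemma aux_bound1 {A D : Type*} [NonUnitalCStarAlgebra A] [CStarAlgebra D] (φ : ℝ → A → D)
    (h : IsAsymptoticHom φ) (a : A) (ha : ‖a‖ ≤ 1) : ∀ᶠ t in atTop, ‖φ t a‖ ≤ 2 := by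
  obtain ⟨hadd, hsmul⟩ := aux_hom φ h
  obtain ⟨-, hstar, -, hmul⟩ := h
  set g : ℝ → ℝ := fun x => 1 - √(1 - x) with hg
  set y : A := cfcₙ g (star a * a) with hy
  have hgc : Continuous g := by fun_prop
  have hg0 : g 0 = 0 := by simp [hg]
  have hsa : IsSelfAdjoint (star a * a) := IsSelfAdjoint.star_mul_self a
  have hysa : IsSelfAdjoint y := cfcₙ_predicate _ _
  have hyy : star a * a + y * y = (2 : ℂ) • y := by
    have e1 : star a * a = cfcₙ (fun x : ℝ => x) (star a * a) := (cfcₙ_id' ℝ _).symm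
    rw [two_smul, hy]
    conv_lhs => enter [1]; rw [e1]
    rw [← cfcₙ_mul g g (star a * a) hgc.continuousOn hg0 hgc.continuousOn hg0,
      ← cfcₙ_add (a := star a * a) (f := fun x : ℝ => x) (g := fun x => g x * g x)
        continuousOn_id rfl (hgc.mul hgc).continuousOn (by simp [hg0]),
      ← cfcₙ_add (a := star a * a) (f := g) (g := g) hgc.continuousOn hg0 hgc.continuousOn hg0]
    refine cfcₙ_congr fun x hx => ?_
    have hx1 : x ≤ 1 := by
      have := NonUnitalIsometricContinuousFunctionalCalculus.norm_quasispectrum_le (𝕜 := ℝ)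
        (star a * a) hx hsa
      rw [CStarRing.norm_star_mul_self, Real.norm_eq_abs] at this
      nlinarith [norm_nonneg a, le_abs_self x]
    have := Real.sq_sqrt (sub_nonneg.2 hx1)
    simp only [hg]
    nlinarith
  have H : Tendsto (fun t => φ t (star a) * φ t a - (2 : ℂ) • φ t y + φ t y * φ t y) atTop
      (nhds 0) := by
    have := ((((tendsto_zero_iff_norm_tendsto_zero.2 (hmul (star a) a)).neg).sub
      (tendsto_zero_iff_norm_tendsto_zero.2 (hmul y y))).sub (hadd (star a * a) (y * y))).add
      (hsmul 2 y)
    simp only [hyy, neg_zero, sub_zero, add_zero] at this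
    refine this.congr fun t => ?_
    abel
  have H1 := (hstar a).eventually_le_const (show (0 : ℝ) < 1 / 8 by norm_num)
  have H2 := (hstar y).eventually_le_const (show (0 : ℝ) < 1 / 8 by norm_num)
  have H3 := H.norm.eventually_le_const (u := 1 / 8) (by norm_num)
  filter_upwards [H1, H2, H3] with t h1 h2 h3
  rw [hysa.star_eq] at h2
  exact aux_core _ _ _ _ le_rfl h1 h2 h3

lemma aux_bound {A D : Type*} [NonUnitalCStarAlgebra A] [CStarAlgebra D] (φ : ℝ → A → D)
    (h : IsAsymptoticHom φ) (a : A) (δ : ℝ) (hδ : 0 < δ) (ha : ‖a‖ ≤ δ) :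
    ∀ᶠ t in atTop, ‖φ t a‖ ≤ 3 * δ := by
  have h1 := aux_bound1 φ h (((δ⁻¹ : ℝ) : ℂ) • a) (by
    rw [norm_smul]; simp [abs_of_pos hδ]; rw [inv_mul_le_iff₀ hδ]; simpa)
  have h2 := ((aux_hom φ h).2 (δ : ℂ) (((δ⁻¹ : ℝ) : ℂ) • a)).norm.eventually_le_const (u := δ)
    (by simpa)
  filter_upwards [h1, h2] with t h1 h2
  rw [smul_smul, show ((δ : ℂ) * ((δ⁻¹ : ℝ) : ℂ)) = 1 by
    rw [← Complex.ofReal_mul, mul_inv_cancel₀ hδ.ne', Complex.ofReal_one], one_smul] at h2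
  have h3 := norm_le_norm_add_norm_sub' (φ t a) ((δ : ℂ) • φ t (((δ⁻¹ : ℝ) : ℂ) • a))
  have h4 : ‖(δ : ℂ) • φ t (((δ⁻¹ : ℝ) : ℂ) • a)‖ ≤ δ * 2 := by
    rw [norm_smul, Complex.norm_real, Real.norm_eq_abs, abs_of_pos hδ]; gcongr
  linarith

lemma aux_diff {A D : Type*} [NonUnitalCStarAlgebra A] [CStarAlgebra D] (φ : ℝ → A → D)
    (h : IsAsymptoticHom φ) (a b : A) (δ : ℝ) (hδ : 0 < δ) (ha : ‖a - b‖ ≤ δ) :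
    ∀ᶠ t in atTop, ‖φ t a - φ t b‖ ≤ 4 * δ := by
  have h1 := aux_bound φ h (a - b) δ hδ ha
  have h2 := ((aux_hom φ h).1 (a - b) b).norm.eventually_le_const (u := δ) (by simpa)
  filter_upwards [h1, h2] with t h1 h2
  rw [sub_add_cancel] at h2
  have : φ t a - φ t b = (φ t a - φ t (a - b) - φ t b) + φ t (a - b) := by abel
  rw [this]
  linarith [norm_add_le (φ t a - φ t (a - b) - φ t b) (φ t (a - b))]

lemma aux_r (S : ℕ → ℝ) : ∃ r : ℝ → ℝ, Continuous r ∧ MonotoneOn r (Ici 1) ∧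
    (∀ t ∈ Ici (1 : ℝ), t ≤ r t) ∧ ∀ t ∈ Ici (1 : ℝ), S ⌊t⌋₊ ≤ r t := by
  set T : ℕ → ℝ := fun n => ∑ k ∈ Finset.range (n + 1), |S k| with hT
  have hTm : Monotone T := fun m n hmn =>
    Finset.sum_le_sum_of_subset_of_nonneg (Finset.range_mono (by omega))
      (fun _ _ _ => abs_nonneg _)
  have hT0 : ∀ n, 0 ≤ T n := fun n => Finset.sum_nonneg fun _ _ => abs_nonneg _
  have hST : ∀ n, S n ≤ T n := fun n => (le_abs_self _).trans
    (Finset.single_le_sum (f := fun k => |S k|) (fun _ _ => abs_nonneg _) (by simp))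
  set g : ℝ → ℝ := fun x => T ⌊x⌋₊ with hg
  have hgm : Monotone g := hTm.comp Nat.floor_mono
  have hg0 : ∀ x, 0 ≤ g x := fun x => hT0 _
  have hgi : ∀ a b, IntervalIntegrable g MeasureTheory.volume a b := fun a b =>
    hgm.intervalIntegrable
  have hmono : Monotone (fun t => t + ∫ x in (0 : ℝ)..(t + 1), g x) := by
    intro s t hst
    have : (∫ x in (0 : ℝ)..(s + 1), g x) + ∫ x in (s + 1)..(t + 1), g x
      = ∫ x in (0 : ℝ)..(t + 1), g x :=
      intervalIntegral.integral_add_adjacent_intervals (hgi _ _) (hgi _ _)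
    have h2 : 0 ≤ ∫ x in (s + 1)..(t + 1), g x :=
      intervalIntegral.integral_nonneg (by linarith) fun x _ => hg0 x
    simp only
    linarith
  have hlow : ∀ t : ℝ, 1 ≤ t → g t ≤ ∫ x in (0 : ℝ)..(t + 1), g x := by
    intro t ht
    have : (∫ x in (0 : ℝ)..t, g x) + ∫ x in t..(t + 1), g x
      = ∫ x in (0 : ℝ)..(t + 1), g x :=
      intervalIntegral.integral_add_adjacent_intervals (hgi _ _) (hgi _ _)
    have h2 : 0 ≤ ∫ x in (0 : ℝ)..t, g x :=
      intervalIntegral.integral_nonneg (by linarith) fun x _ => hg0 x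
    have h3 : (∫ x in t..(t + 1), g t) ≤ ∫ x in t..(t + 1), g x :=
      intervalIntegral.integral_mono_on (by linarith) (by simp) (hgi _ _)
        fun x hx => hgm hx.1
    simp at h3
    linarith
  refine ⟨fun t => t + ∫ x in (0 : ℝ)..(t + 1), g x, ?_, hmono.monotoneOn _, ?_, ?_⟩
  · exact continuous_id.add ((intervalIntegral.continuous_primitive hgi 0).comp
      (continuous_id.add continuous_const))
  · intro t ht
    have := hlow t ht
    have := hg0 t
    simp only; linarith
  · intro t ht
    have := hlow t ht
    have h2 : S ⌊t⌋₊ ≤ g t := hST _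
    have h3 : (1 : ℝ) ≤ t := ht
    simp only; linarith

/-- quantitative estimate for functional calculus -/
lemma aux_cfc {B : Type*} [NonUnitalCStarAlgebra B] [PartialOrder B] [StarOrderedRing B]
    (f : ℝ → ℝ) (hf : ContinuousOn f (Icc 0 1)) (h0 : f 0 = 0) (h1 : f 1 = 0)
    (ε : ℝ) (hε : 0 < ε) : ∃ C : ℝ, 0 ≤ C ∧ ∀ u b : B, 0 ≤ u → ‖u‖ ≤ 1 →
      ‖cfcₙ f u * b‖ ≤ C * ‖u * b - b‖ + ε * ‖b‖ := by
  obtain ⟨δ, hδ, hδf⟩ := Metric.continuousOn_iff.1 hf 1 (by simp) ε hε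
  have hm : ∀ x : ℝ, 0 < max (1 - x) (δ / 2) := fun x => lt_max_of_lt_right (by linarith)
  set g : ℝ → ℝ := fun x => f x / max (1 - x) (δ / 2) with hg
  set k : ℝ → ℝ := fun x => f x - (g x - x * g x) with hk
  have hgc : ContinuousOn g (Icc 0 1) :=
    hf.div (by fun_prop) fun x _ => (hm x).ne'
  have hkc : ContinuousOn k (Icc 0 1) := hf.sub (hgc.sub (continuousOn_id.mul hgc))
  have hg0 : g 0 = 0 := by simp [hg, h0]
  have hk0 : k 0 = 0 := by simp [hk, h0, hg0]
  obtain ⟨C, hC⟩ := isCompact_Icc.exists_bound_of_continuousOn hgc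
  have hC0 : 0 ≤ C := (norm_nonneg _).trans (hC 0 (by simp))
  have hkε : ∀ x ∈ Icc (0 : ℝ) 1, ‖k x‖ ≤ ε := by
    intro x hx
    have hkx : k x = f x * (1 - (1 - x) / max (1 - x) (δ / 2)) := by
      simp only [hk, hg]; ring
    rcases le_total (δ / 2) (1 - x) with h | h
    · have h' : (1 - x) ≠ 0 := by linarith
      rw [hkx, max_eq_left h, div_self h']; simp [hε.le]
    · have hfx : ‖f x‖ ≤ ε := by
        have := hδf x hx (by rw [Real.dist_eq, abs_sub_comm, abs_of_nonneg (by linarith [hx.2])]; linarith)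
        rw [h1, dist_zero_right] at this
        exact this.le
      have hq0 : 0 ≤ (1 - x) / max (1 - x) (δ / 2) := div_nonneg (by linarith [hx.2]) (hm x).le
      have hq1 : (1 - x) / max (1 - x) (δ / 2) ≤ 1 := (div_le_one (hm x)).2 (le_max_left _ _)
      rw [hkx, norm_mul, Real.norm_eq_abs (1 - _), abs_of_nonneg (by linarith)]
      nlinarith [norm_nonneg (f x)]
  refine ⟨C, hC0, fun u b hu hu1 => ?_⟩
  have hsa : IsSelfAdjoint u := .of_nonneg hu
  have hsub : quasispectrum ℝ u ⊆ Icc 0 1 := by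
    intro x hx
    refine ⟨quasispectrum_nonneg_of_nonneg u hu x hx, ?_⟩
    have := NonUnitalIsometricContinuousFunctionalCalculus.norm_quasispectrum_le (𝕜 := ℝ) u hx hsa
    exact (le_abs_self x).trans (this.trans hu1)
  have hgc' := hgc.mono hsub
  have hkc' := hkc.mono hsub
  have hxg : cfcₙ (fun x => g x * x) u = cfcₙ g u * u := by
    rw [cfcₙ_mul g (fun x => x) u hgc' hg0, cfcₙ_id' ℝ u]
  have hxg' : ContinuousOn (fun x => g x * x) (quasispectrum ℝ u) := hgc'.mul continuousOn_id
  have e : cfcₙ f u = cfcₙ g u - cfcₙ g u * u + cfcₙ k u := by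
    rw [← hxg, ← cfcₙ_sub g (fun x => g x * x) u hgc' hg0 hxg' (by simp),
      ← cfcₙ_add (a := u) (f := fun x => g x - g x * x) (g := k) (hgc'.sub hxg') (by simp [hg0]) hkc' hk0]
    exact cfcₙ_congr fun x _ => by simp only [hk]; ring
  have e2 : cfcₙ f u * b = - (cfcₙ g u * (u * b - b)) + cfcₙ k u * b := by
    rw [e]; noncomm_ring
  rw [e2]
  refine (norm_add_le _ _).trans (add_le_add ?_ ?_)
  · rw [norm_neg]
    refine (norm_mul_le _ _).trans ?_
    gcongr
    exact norm_cfcₙ_le fun x hx => hC x (hsub hx)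
  · refine (norm_mul_le _ _).trans ?_
    gcongr
    exact norm_cfcₙ_le fun x hx => hkε x (hsub hx)

lemma aux_norm_coe {B : Type*} [NonUnitalCStarAlgebra B] (b : B) :
    ‖(b : 𝓜(ℂ, B))‖ = ‖b‖ := by
  rw [← DoubleCentralizer.norm_fst, DoubleCentralizer.coe_fst]
  exact ContinuousLinearMap.opNorm_mul_apply ℂ B b

lemma aux_coe_mul {B : Type*} [NonUnitalCStarAlgebra B] (a b : B) :
    ((a * b : B) : 𝓜(ℂ, B)) = (a : 𝓜(ℂ, B)) * (b : 𝓜(ℂ, B)) :=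
  map_mul (DoubleCentralizer.coeHom (𝕜 := ℂ) (A := B)) a b

lemma aux_coe_sub {B : Type*} [NonUnitalCStarAlgebra B] (a b : B) :
    ((a - b : B) : 𝓜(ℂ, B)) = (a : 𝓜(ℂ, B)) - (b : 𝓜(ℂ, B)) :=
  map_sub (DoubleCentralizer.coeHom (𝕜 := ℂ) (A := B)) a b

lemma aux_coe_cfc {B : Type*} [NonUnitalCStarAlgebra B] [PartialOrder B] [StarOrderedRing B]
    (f : ℝ → ℝ) (u : B) (hf : ContinuousOn f (Icc 0 1)) (h0 : f 0 = 0)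
    (hu : 0 ≤ u) (hu1 : ‖u‖ ≤ 1) :
    ((cfcₙ f u : B) : 𝓜(ℂ, B)) = cfcₙ f (u : 𝓜(ℂ, B)) := by
  have hsa : IsSelfAdjoint u := .of_nonneg hu
  have hsub : quasispectrum ℝ u ⊆ Icc 0 1 := by
    intro x hx
    refine ⟨quasispectrum_nonneg_of_nonneg u hu x hx, ?_⟩
    have := NonUnitalIsometricContinuousFunctionalCalculus.norm_quasispectrum_le (𝕜 := ℝ) u hx hsa
    exact (le_abs_self x).trans (this.trans hu1)
  have hiso : Isometry (DoubleCentralizer.coeHom (𝕜 := ℂ) (A := B)) :=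
    AddMonoidHomClass.isometry_of_norm _ fun b => aux_norm_coe b
  exact NonUnitalStarAlgHomClass.map_cfcₙ (R := ℝ) (S := ℂ)
    (DoubleCentralizer.coeHom (𝕜 := ℂ) (A := B)) f u (hf.mono hsub) h0 hiso.continuous hsa
    (hsa.map (DoubleCentralizer.coeHom (𝕜 := ℂ) (A := B)))

end Aux

/-- Let `π : A → M(B)` be an asymptotic homomorphism with `π_t(a) - π_1(a) ∈ B`,
and let `(u_t)` be a continuous approximate unit for `B` asymptotically commuting with
`π_1(A)`. Then there is an increasing continuous `r : [1,∞) → [1,∞)` with `r(t) ≥ t` such that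
`lim_{t→∞} ‖f(u_{r(t)})π_1(a) - f(u_{r(t)})π_t(a)‖ = 0` for all `a ∈ A` and all continuous
`f : [0,1] → ℝ` with `f(0) = f(1) = 0`. -/
theorem stmt_2 {A B : Type*} [NonUnitalCStarAlgebra A] [TopologicalSpace.SeparableSpace A]
    [NonUnitalCStarAlgebra B] [TopologicalSpace.SeparableSpace B]
    [PartialOrder B] [StarOrderedRing B]
    (π : ℝ → A → 𝓜(ℂ, B)) (hπ : IsAsymptoticHom π)
    (hπB : ∀ t ∈ Ici (1:ℝ), ∀ a : A, ∃ b : B, π t a - π 1 a = (b : 𝓜(ℂ, B)))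
    (u : ℝ → B)
    (hu_pos : ∀ t ∈ Ici (1:ℝ), 0 ≤ u t) (hu_norm : ∀ t ∈ Ici (1:ℝ), ‖u t‖ ≤ 1)
    (hu_cont : ContinuousOn u (Ici 1))
    (hu_approx : ∀ b : B, Tendsto (fun t => ‖u t * b - b‖) atTop (nhds 0))
    (hu_comm : ∀ a : A,
      Tendsto (fun t => ‖(u t : 𝓜(ℂ, B)) * π 1 a - π 1 a * (u t : 𝓜(ℂ, B))‖) atTop (nhds 0)) :
    ∃ r : ℝ → ℝ, ContinuousOn r (Ici 1) ∧ MonotoneOn r (Ici 1) ∧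
      (∀ t ∈ Ici (1:ℝ), t ≤ r t) ∧
      ∀ a : A, ∀ f : ℝ → ℝ, ContinuousOn f (Icc 0 1) → f 0 = 0 → f 1 = 0 →
        Tendsto
          (fun t => ‖(cfcₙ f (u (r t)) : 𝓜(ℂ, B)) * π 1 a -
            (cfcₙ f (u (r t)) : 𝓜(ℂ, B)) * π t a‖) atTop (nhds 0) := by
  classical
  have hπ1 : ∀ t a, ∃ b : B, t ∈ Ici (1 : ℝ) → π t a - π 1 a = (b : 𝓜(ℂ, B)) := by
    intro t a
    by_cases ht : t ∈ Ici (1 : ℝ)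
    · obtain ⟨b, hb⟩ := hπB t ht a
      exact ⟨b, fun _ => hb⟩
    · exact ⟨0, fun h => absurd h ht⟩
  choose bb hbb using hπ1
  have hbn : ∀ a, ContinuousOn (fun t => bb t a) (Ici 1) := by
    intro a
    have hiso : Isometry (DoubleCentralizer.coeHom (𝕜 := ℂ) (A := B)) :=
      AddMonoidHomClass.isometry_of_norm _ fun b => aux_norm_coe b
    rw [hiso.isEmbedding.isInducing.continuousOn_iff]
    refine ((hπ.1 a).sub (continuousOn_const (c := π 1 a))).congr fun t ht => ?_
    exact (hbb t a ht).symm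
  -- elementary perturbation
  have hpert : ∀ s ∈ Ici (1 : ℝ), ∀ z : B, ‖u s * z - z‖ ≤ 2 * ‖z‖ := by
    intro s hs z
    have h1 := norm_sub_le (u s * z) z
    have h2 := norm_mul_le (u s) z
    have h3 := mul_le_mul_of_nonneg_right (hu_norm s hs) (norm_nonneg z)
    linarith
  -- uniformity on compacts
  have hunif : ∀ (a : A) (N ε : ℝ), 0 < ε →
      ∀ᶠ s in atTop, ∀ t ∈ Icc (1 : ℝ) N, ‖u s * bb t a - bb t a‖ ≤ ε := by
    intro a N ε hε
    refine (isCompact_Icc (a := (1 : ℝ)) (b := N)).induction_on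
      (p := fun K => ∀ᶠ s in atTop, ∀ t ∈ K, ‖u s * bb t a - bb t a‖ ≤ ε) ?_ ?_ ?_ ?_
    · simp
    · intro K L hKL h
      exact h.mono fun s hs t ht => hs t (hKL ht)
    · intro K L hK hL
      filter_upwards [hK, hL] with s h1 h2 t ht
      exact ht.elim (h1 t) (h2 t)
    · intro t ht
      have hc : ContinuousWithinAt (fun t => bb t a) (Icc 1 N) t :=
        ((hbn a).mono Icc_subset_Ici_self) t ht
      have hev := Metric.tendsto_nhds.1 hc (ε / 4) (by positivity)
      refine ⟨_, hev, ?_⟩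
      filter_upwards [(hu_approx (bb t a)).eventually_le_const (half_pos hε),
        eventually_ge_atTop (1 : ℝ)] with s hs hs1 t' ht'
      have ht2 : ‖bb t' a - bb t a‖ < ε / 4 := by
        rw [← dist_eq_norm]; exact ht'
      have e : u s * bb t' a - bb t' a = (u s * bb t a - bb t a)
          + (u s * (bb t' a - bb t a) - (bb t' a - bb t a)) := by
        rw [mul_sub]; abel
      rw [e]
      have h1 := norm_add_le (u s * bb t a - bb t a)
        (u s * (bb t' a - bb t a) - (bb t' a - bb t a))
      have h2 := hpert s hs1 (bb t' a - bb t a)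
      linarith
  set d : ℕ → A := TopologicalSpace.denseSeq A with hd
  have hS : ∀ n : ℕ, ∃ S : ℝ, ∀ s ≥ S, ∀ i ∈ Finset.range (n + 1),
      ∀ t ∈ Icc (1 : ℝ) (n + 1), ‖u s * bb t (d i) - bb t (d i)‖ ≤ 1 / ((n : ℝ) + 1) := by
    intro n
    refine eventually_atTop.1 ((eventually_all_finset _).2 fun i _ => ?_)
    exact hunif (d i) _ _ (by positivity)
  choose S hS using hS
  obtain ⟨r, hrc, hrm, hrt, hrS⟩ := aux_r S
  have hr1 : ∀ t ∈ Ici (1 : ℝ), r t ∈ Ici (1 : ℝ) := fun t ht => le_trans ht (hrt t ht)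
  have hrtop : Tendsto r atTop atTop :=
    tendsto_atTop_mono' _ ((eventually_ge_atTop (1 : ℝ)).mono fun t ht => hrt t ht) tendsto_id
  -- dense sequence
  have hdense : ∀ i, Tendsto (fun t => ‖u (r t) * bb t (d i) - bb t (d i)‖) atTop (nhds 0) := by
    intro i
    have hlim : Tendsto (fun t : ℝ => 1 / ((⌊t⌋₊ : ℝ) + 1)) atTop (nhds 0) :=
      (tendsto_one_div_add_atTop_nhds_zero_nat (𝕜 := ℝ)).comp tendsto_nat_floor_atTop
    refine squeeze_zero' (Eventually.of_forall fun _ => norm_nonneg _) ?_ hlim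
    filter_upwards [eventually_ge_atTop (1 : ℝ), eventually_ge_atTop (i : ℝ)] with t ht hti
    refine hS ⌊t⌋₊ (r t) (hrS t ht) i ?_ t ⟨ht, (Nat.lt_floor_add_one t).le⟩
    have := Nat.le_floor hti
    simp only [Finset.mem_range]; omega
  -- all elements
  have hall : ∀ a, Tendsto (fun t => ‖u (r t) * bb t a - bb t a‖) atTop (nhds 0) := by
    intro a
    have key : ∀ ε > 0, ∀ᶠ t in atTop, ‖u (r t) * bb t a - bb t a‖ ≤ ε := by
      intro ε hε
      set δ := ε / 18 with hδ
      have hδ0 : 0 < δ := by positivity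
      obtain ⟨i, hi⟩ := (TopologicalSpace.denseRange_denseSeq A).exists_dist_lt a hδ0
      rw [dist_eq_norm] at hi
      have hdiff := aux_diff π hπ a (d i) δ hδ0 hi.le
      obtain ⟨T, hT, hT1⟩ := (hdiff.and (eventually_ge_atTop (1 : ℝ))).exists
      set c : B := bb T a - bb T (d i) with hc
      have hcl := ((hu_approx c).comp hrtop).eventually_le_const hδ0
      filter_upwards [hdiff, eventually_ge_atTop (1 : ℝ), hcl,
        (hdense i).eventually_le_const hδ0] with t h1 ht h2 h3
      set z : B := bb t a - bb t (d i) - c with hz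
      have hzn : ‖z‖ ≤ 8 * δ := by
        have : (z : 𝓜(ℂ, B)) = (π t a - π t (d i)) - (π T a - π T (d i)) := by
          rw [hz, hc, aux_coe_sub, aux_coe_sub, aux_coe_sub, ← hbb t a ht, ← hbb T a hT1,
            ← hbb t (d i) ht, ← hbb T (d i) hT1]
          abel
        rw [← aux_norm_coe, this]
        refine (norm_sub_le _ _).trans ?_
        linarith
      have e : u (r t) * bb t a - bb t a = (u (r t) * bb t (d i) - bb t (d i))
          + (u (r t) * c - c) + (u (r t) * z - z) := by
        rw [hz, mul_sub (u (r t)) _ c, mul_sub (u (r t)) (bb t a)]; abel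
      rw [e]
      have h4 := hpert (r t) (hr1 t ht) z
      have h5 := norm_add₃_le (a := u (r t) * bb t (d i) - bb t (d i)) (b := u (r t) * c - c)
        (c := u (r t) * z - z)
      simp only [Function.comp] at h2
      linarith
    rw [Metric.tendsto_nhds]
    intro ε hε
    filter_upwards [key (ε / 2) (half_pos hε)] with t ht
    rw [dist_zero_right, norm_norm]
    linarith
  refine ⟨r, hrc.continuousOn, hrm, hrt, fun a f hf hf0 hf1 => ?_⟩
  have hbd : ∃ M : ℝ, 0 < M ∧ ∀ᶠ t in atTop, ‖bb t a‖ ≤ M := by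
    refine ⟨3 * (‖a‖ + 1) + ‖π 1 a‖, by positivity, ?_⟩
    filter_upwards [aux_bound π hπ a (‖a‖ + 1) (by positivity) (by linarith),
      eventually_ge_atTop (1 : ℝ)] with t h1 ht
    rw [← aux_norm_coe, ← hbb t a ht]
    exact (norm_sub_le _ _).trans (by linarith)
  obtain ⟨M, hM0, hM⟩ := hbd
  rw [Metric.tendsto_nhds]
  intro ε hε
  obtain ⟨C, hC0, hC⟩ := aux_cfc (B := B) f hf hf0 hf1 (ε / (4 * M)) (by positivity)
  have h1 := (hall a).eventually_le_const (show 0 < ε / (4 * (C + 1)) by positivity)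
  filter_upwards [h1, hM, eventually_ge_atTop (1 : ℝ)] with t h1 h2 ht
  rw [dist_zero_right, norm_norm, ← mul_sub, ← norm_neg, ← mul_neg, neg_sub, hbb t a ht,
    ← aux_coe_cfc f _ hf hf0 (hu_pos _ (hr1 t ht)) (hu_norm _ (hr1 t ht)), ← aux_coe_mul, aux_norm_coe]
  refine (hC (u (r t)) (bb t a) (hu_pos _ (hr1 t ht)) (hu_norm _ (hr1 t ht))).trans_lt ?_
  have e1 : C * ‖u (r t) * bb t a - bb t a‖ ≤ ε / 4 := by
    calc C * ‖u (r t) * bb t a - bb t a‖ ≤ (C + 1) * (ε / (4 * (C + 1))) := by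
          gcongr; linarith
      _ = ε / 4 := by field_simp
  have e2 : ε / (4 * M) * ‖bb t a‖ ≤ ε / 4 := by
    calc ε / (4 * M) * ‖bb t a‖ ≤ ε / (4 * M) * M := by gcongr
      _ = ε / 4 := by field_simp
  linarith
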